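/- Let T ∈ (0, ∞], σ > 0, and let E : [0,T) → ℝ be twice differentiable with E(t) > 0 for all t ∈ [0,T), E'(0) > 0, and E''(t)E(t) − (1+σ)(E'(t))² ≥ 0 for all t ∈ [0,T). Then for every t ∈ [0,T) one has E(t) ≥ (E(0)^{−σ} − σ E'(0) E(0)^{−σ−1} t)^{−1/σ}; in particular, necessarily T ≤ E(0) / (σ E'(0)). -/

import Mathlib

open Set
open scoped ENNReal

/-! The function `F = E ^ (-σ)` is concave: `F' = -σ E' E ^ (-σ-1)` and
`F'' = -σ E ^ (-σ-2) (E'' E - (1+σ) E'²) ≤ 0`. Hence `F` lies below its tangent line at `0`,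
that is, `F t ≤ E 0 ^ (-σ) - σ E' 0 E 0 ^ (-σ-1) t`. Applying the decreasing map
`x ↦ x ^ (-1/σ)` to this inequality gives the lower bound for `E`. As `F > 0`, the tangent line
is positive throughout `[0,T)`, so its zero `E 0 / (σ E' 0)` is not in `[0,T)`. -/

/-- **Abstract concavity (blow-up) lemma.**
Let `T ∈ (0, ∞]`, `σ > 0`, and let `E : [0,T) → ℝ` be twice differentiable (with first
and second derivatives `E'` and `E''`) with `E > 0` on `[0,T)`, `E'(0) > 0`, and
`E''(t)E(t) − (1+σ)(E'(t))² ≥ 0` on `[0,T)`.  Then for every `t ∈ [0,T)` one has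
`E(t) ≥ (E(0)^{−σ} − σ E'(0) E(0)^{−σ−1} t)^{−1/σ}`; in particular
`T ≤ E(0) / (σ E'(0))`. -/
theorem concavity_blowup
    (T : ℝ≥0∞) (hT : 0 < T) (σ : ℝ) (hσ : 0 < σ)
    (E E' E'' : ℝ → ℝ)
    (S : Set ℝ) (hS : S = {t : ℝ | 0 ≤ t ∧ ENNReal.ofReal t < T})
    (hE' : ∀ t ∈ S, HasDerivWithinAt E (E' t) S t)
    (hE'' : ∀ t ∈ S, HasDerivWithinAt E' (E'' t) S t)
    (hEpos : ∀ t ∈ S, 0 < E t)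
    (hE'0 : 0 < E' 0)
    (hconc : ∀ t ∈ S, 0 ≤ E'' t * E t - (1+σ) * (E' t)^2) :
    (∀ t ∈ S, (E 0 ^ (-σ) - σ * E' 0 * E 0 ^ (-σ-1) * t) ^ (-1/σ) ≤ E t) ∧
      T ≤ ENNReal.ofReal (E 0 / (σ * E' 0)) := by
  have h0 : (0 : ℝ) ∈ S := by rw [hS]; simpa using hT
  have hnn : ∀ t ∈ S, 0 ≤ t := fun t ht => by rw [hS] at ht; exact ht.1
  have hconv : Convex ℝ S := by
    refine OrdConnected.convex ⟨fun x hx y hy z hz => ?_⟩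
    rw [hS] at hx hy ⊢
    exact ⟨hx.1.trans hz.1, (ENNReal.ofReal_le_ofReal hz.2).trans_lt hy.2⟩
  have hF : ∀ t ∈ S, HasDerivWithinAt (fun s => E s ^ (-σ))
      (E' t * (-σ) * E t ^ (-σ - 1)) S t := fun t ht =>
    (hE' t ht).rpow_const (Or.inl (hEpos t ht).ne')
  -- Up to the factor `-σ`, this is the derivative of `E ^ (-σ)`.
  have hG : ∀ t ∈ S, HasDerivWithinAt (fun s => E' s * E s ^ (-σ - 1))
      (E'' t * E t ^ (-σ - 1) + E' t * (E' t * (-σ - 1) * E t ^ (-σ - 1 - 1))) S t :=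
    fun t ht => (hE'' t ht).mul ((hE' t ht).rpow_const (Or.inl (hEpos t ht).ne'))
  have hGmono : MonotoneOn (fun s => E' s * E s ^ (-σ - 1)) S := by
    refine monotoneOn_of_hasDerivWithinAt_nonneg hconv
      (fun t ht => (hG t ht).continuousWithinAt)
      (fun t ht => (hG t (interior_subset ht)).mono interior_subset) fun t ht => ?_
    have ht := interior_subset ht
    have hp := hEpos t ht
    have e : E t ^ (-σ - 1) = E t ^ (-σ - 1 - 1) * E t := by
      rw [← Real.rpow_add_one hp.ne']; congr 1; ring
    have := mul_nonneg (Real.rpow_pos_of_pos hp (-σ - 1 - 1)).le (hconc t ht)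
    rw [e]
    linarith
  have hFanti : AntitoneOn (fun s => E s ^ (-σ) + σ * E' 0 * E 0 ^ (-σ - 1) * s) S := by
    have hd : ∀ t ∈ S, HasDerivWithinAt (fun s => E s ^ (-σ) + σ * E' 0 * E 0 ^ (-σ - 1) * s)
        (E' t * (-σ) * E t ^ (-σ - 1) + σ * E' 0 * E 0 ^ (-σ - 1) * 1) S t := fun t ht =>
      (hF t ht).add ((hasDerivWithinAt_id t S).const_mul _)
    refine antitoneOn_of_hasDerivWithinAt_nonpos hconv
      (fun t ht => (hd t ht).continuousWithinAt)
      (fun t ht => (hd t (interior_subset ht)).mono interior_subset) fun t ht => ?_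
    have ht := interior_subset ht
    have := mul_le_mul_of_nonneg_left (hGmono h0 ht (hnn t ht)) hσ.le
    simp only at this
    linarith
  have key : ∀ t ∈ S, E t ^ (-σ) ≤ E 0 ^ (-σ) - σ * E' 0 * E 0 ^ (-σ - 1) * t := fun t ht => by
    have := hFanti h0 ht (hnn t ht)
    simp only [mul_zero, add_zero] at this
    linarith
  refine ⟨fun t ht => ?_, ?_⟩
  · have hp := hEpos t ht
    have e : (E t ^ (-σ)) ^ (-1 / σ) = E t := by
      rw [← Real.rpow_mul hp.le, show -σ * (-1 / σ) = 1 by field_simp, Real.rpow_one]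
    calc _ ≤ (E t ^ (-σ)) ^ (-1 / σ) :=
          Real.rpow_le_rpow_of_nonpos (Real.rpow_pos_of_pos hp _) (key t ht)
            (div_nonpos_of_nonpos_of_nonneg (by norm_num) hσ.le)
      _ = E t := e
  · by_contra! hlt
    have hp := hEpos 0 h0
    have hmem : E 0 / (σ * E' 0) ∈ S := by
      rw [hS]; exact ⟨by positivity, hlt⟩
    have h1 := key _ hmem
    have h2 := Real.rpow_pos_of_pos (hEpos _ hmem) (-σ)
    have e : E 0 ^ (-σ) = E 0 ^ (-σ - 1) * E 0 := by
      rw [← Real.rpow_add_one hp.ne']; congr 1; ring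
    have e2 : σ * E' 0 * E 0 ^ (-σ - 1) * (E 0 / (σ * E' 0)) = E 0 ^ (-σ - 1) * E 0 := by
      field_simp
    rw [e2, e] at h1
    linarith
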